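/- arXiv:2502.04646 — 2 statements merged into one kernel-verified Lean document; each statement's English description precedes it below -/
import Mathlib

section
/- (Log-gap bound for quadratic weights.) Fix x ∈ ℝ^d with ∫ ‖y‖² π_x(y) dy < ∞. Suppose l(y) ≥ m for all y with m > 0, l(x̄₀(x)) ≥ m, and that for all y ∈ ℝ^d, l(y) = l(x̄₀(x)) + cᵀ(y − x̄₀(x)) + ½ (y − x̄₀(x))ᵀ H (y − x̄₀(x)) for some c ∈ ℝ^d and some symmetric matrix H with ‖H‖ ≤ η₂. Then |log h(x) − log l(x̄₀(x))| ≤ (η₂/(2m)) · ∫ ‖y − x̄₀(x)‖² π_x(y) dy. -/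
open MeasureTheory Real

noncomputable section

/-- Gaussian transition kernel `G(x,y) = (2π(1−ᾱ))^(−d/2) exp(−‖x−√ᾱ y‖²/(2(1−ᾱ)))`. -/
def G (d : ℕ) (α : ℝ) (x y : EuclideanSpace ℝ (Fin d)) : ℝ :=
  (2 * π * (1 - α)) ^ (-(d : ℝ) / 2) * exp (-‖x - Real.sqrt α • y‖ ^ 2 / (2 * (1 - α)))

/-- Noise-perturbed density `p_t(x) = ∫ G(x,y) p₀(y) dy`. -/
def pt (d : ℕ) (α : ℝ) (p₀ : EuclideanSpace ℝ (Fin d) → ℝ)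
    (x : EuclideanSpace ℝ (Fin d)) : ℝ :=
  ∫ y, G d α x y * p₀ y

/-- Posterior density `π_x(y) = G(x,y) p₀(y) / p_t(x)`. -/
def post (d : ℕ) (α : ℝ) (p₀ : EuclideanSpace ℝ (Fin d) → ℝ)
    (x y : EuclideanSpace ℝ (Fin d)) : ℝ :=
  G d α x y * p₀ y / pt d α p₀ x

/-- Posterior weight average `h(x) = ∫ l(y) π_x(y) dy`. -/
def hAvg (d : ℕ) (α : ℝ) (p₀ l : EuclideanSpace ℝ (Fin d) → ℝ)
    (x : EuclideanSpace ℝ (Fin d)) : ℝ :=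
  ∫ y, l y * post d α p₀ x y

/-- Noise-perturbed importance-sampling density
`q_t(x) = ∫ G(x,y) q₀(y) dy` with `q₀(y) = l(y) p₀(y) / Z₀`. -/
def qt (d : ℕ) (α : ℝ) (p₀ l : EuclideanSpace ℝ (Fin d) → ℝ) (Z₀ : ℝ)
    (x : EuclideanSpace ℝ (Fin d)) : ℝ :=
  ∫ y, G d α x y * (l y * p₀ y / Z₀)


/-- Posterior mean `x̄₀(x) = ∫ y π_x(y) dy`. -/
def postMean (d : ℕ) (α : ℝ) (p₀ : EuclideanSpace ℝ (Fin d) → ℝ)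
    (x : EuclideanSpace ℝ (Fin d)) : EuclideanSpace ℝ (Fin d) :=
  ∫ y, post d α p₀ x y • y

open RealInnerProductSpace in
theorem stmt9 (d : ℕ) (hd : 1 ≤ d) (α : ℝ) (hα0 : 0 < α) (hα1 : α < 1)
    (p₀ l : EuclideanSpace ℝ (Fin d) → ℝ) (m : ℝ) (hm : 0 < m)
    (hp₀pos : ∀ y, 0 < p₀ y) (hp₀int : Integrable p₀) (hp₀one : (∫ y, p₀ y) = 1)
    (hptpos : ∀ x, 0 < pt d α p₀ x)
    (hlmeas : Measurable l) (hlm : ∀ y, m ≤ l y)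
    (x : EuclideanSpace ℝ (Fin d))
    (hGint : Integrable fun y => G d α x y * p₀ y)
    (hmom : Integrable fun y => post d α p₀ x y • y)
    (hmom2 : Integrable fun y => post d α p₀ x y * ‖y‖ ^ 2)
    (hlxbar : m ≤ l (postMean d α p₀ x))
    (η₂ : ℝ) (c : EuclideanSpace ℝ (Fin d))
    (H : EuclideanSpace ℝ (Fin d) →L[ℝ] EuclideanSpace ℝ (Fin d))
    (hsym : ∀ u v, ⟪H u, v⟫ = ⟪u, H v⟫) (hHnorm : ‖H‖ ≤ η₂)
    (hquad : ∀ y, l y = l (postMean d α p₀ x) + ⟪c, y - postMean d α p₀ x⟫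
      + (1 / 2) * ⟪y - postMean d α p₀ x, H (y - postMean d α p₀ x)⟫) :
    |Real.log (hAvg d α p₀ l x) - Real.log (l (postMean d α p₀ x))|
      ≤ (η₂ / (2 * m)) * ∫ y, ‖y - postMean d α p₀ x‖ ^ 2 * post d α p₀ x y := by
  set μ := postMean d α p₀ x with hμ
  set w := post d α p₀ x with hw
  have hpt := hptpos x
  have hG : ∀ y, 0 ≤ G d α x y := by
    intro y
    unfold G
    have : 0 ≤ 2 * π * (1 - α) := mul_nonneg (by positivity) (by linarith)
    exact mul_nonneg (Real.rpow_nonneg this _) (Real.exp_pos _).le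
  have hw0 : ∀ y, 0 ≤ w y := fun y =>
    div_nonneg (mul_nonneg (hG y) (hp₀pos y).le) hpt.le
  have hwint : Integrable w := hGint.div_const _
  have hw1 : ∫ y, w y = 1 := by
    have : ∫ y, w y = (∫ y, G d α x y * p₀ y) / pt d α p₀ x := integral_div _ _
    rw [this]
    exact div_self hpt.ne'
  have hμint : ∫ y, w y • y = μ := rfl
  have hin : ∀ v : EuclideanSpace ℝ (Fin d), Integrable fun y => ⟪v, w y • y⟫ :=
    fun v => hmom.const_inner v
  have hV : Integrable fun y => ‖y - μ‖ ^ 2 * w y := by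
    have h := (hmom2.sub ((hin μ).const_mul 2)).add (hwint.const_mul (‖μ‖ ^ 2))
    refine h.congr (Filter.Eventually.of_forall fun y => ?_)
    simp only [Pi.add_apply, Pi.sub_apply]
    rw [norm_sub_sq_real, inner_smul_right, real_inner_comm y μ]
    ring
  have hlin : Integrable fun y => ⟪c, y - μ⟫ * w y := by
    refine ((hin c).sub (hwint.const_mul ⟪c, μ⟫)).congr (Filter.Eventually.of_forall fun y => ?_)
    simp only [Pi.sub_apply]
    rw [inner_sub_right, inner_smul_right]
    ring
  have hlin0 : ∫ y, ⟪c, y - μ⟫ * w y = 0 := by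
    have : ∀ y, ⟪c, y - μ⟫ * w y = ⟪c, w y • y⟫ - ⟪c, μ⟫ * w y := by
      intro y
      rw [inner_sub_right, inner_smul_right]
      ring
    simp_rw [this]
    rw [integral_sub (hin c) (hwint.const_mul _), integral_const_mul, hw1,
      integral_inner hmom c, hμint]
    ring
  have hbd : ∀ y, |⟪y - μ, H (y - μ)⟫ * w y| ≤ η₂ * (‖y - μ‖ ^ 2 * w y) := by
    intro y
    rw [abs_mul, abs_of_nonneg (hw0 y), ← mul_assoc]
    refine mul_le_mul_of_nonneg_right ?_ (hw0 y)
    calc |⟪y - μ, H (y - μ)⟫| ≤ ‖y - μ‖ * ‖H (y - μ)‖ := abs_real_inner_le_norm _ _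
      _ ≤ ‖y - μ‖ * (η₂ * ‖y - μ‖) := by
        gcongr
        exact H.le_of_opNorm_le hHnorm _
      _ = _ := by ring
  have hq : Integrable fun y => ⟪y - μ, H (y - μ)⟫ * w y := by
    refine (hV.const_mul η₂).mono' ?_ (Filter.Eventually.of_forall hbd)
    refine AEStronglyMeasurable.mul ?_ hwint.aestronglyMeasurable
    exact Continuous.aestronglyMeasurable (by fun_prop)
  have hlint : ∀ y, l y * w y = (l μ * w y + ⟪c, y - μ⟫ * w y)
      + (1 / 2) * (⟪y - μ, H (y - μ)⟫ * w y) := by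
    intro y
    rw [hquad y]
    ring
  have hA : hAvg d α p₀ l x = l μ + (1 / 2) * ∫ y, ⟪y - μ, H (y - μ)⟫ * w y := by
    change ∫ y, l y * w y = _
    simp_rw [hlint]
    have hs : Integrable fun y => l μ * w y + ⟪c, y - μ⟫ * w y := (hwint.const_mul _).add hlin
    rw [integral_add hs (hq.const_mul _),
      integral_add (hwint.const_mul _) hlin, integral_const_mul, integral_const_mul, hw1, hlin0]
    ring
  have hAm : m ≤ hAvg d α p₀ l x := by
    change m ≤ ∫ y, l y * w y
    have hI : Integrable fun y => l y * w y := by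
      simp_rw [hlint]
      exact ((hwint.const_mul _).add hlin).add (hq.const_mul _)
    calc m = ∫ y, m * w y := by rw [integral_const_mul, hw1, mul_one]
      _ ≤ _ := integral_mono (hwint.const_mul m) hI
        fun y => mul_le_mul_of_nonneg_right (hlm y) (hw0 y)
  have hdiff : |hAvg d α p₀ l x - l μ| ≤ η₂ / 2 * ∫ y, ‖y - μ‖ ^ 2 * w y := by
    have h1 : |∫ y, ⟪y - μ, H (y - μ)⟫ * w y| ≤ ∫ y, η₂ * (‖y - μ‖ ^ 2 * w y) := by
      rw [← Real.norm_eq_abs]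
      exact norm_integral_le_of_norm_le (hV.const_mul η₂) (Filter.Eventually.of_forall hbd)
    rw [integral_const_mul] at h1
    rw [hA, add_sub_cancel_left, abs_mul, abs_of_pos (by norm_num : (0 : ℝ) < 1 / 2)]
    linarith
  have hlog : ∀ a b : ℝ, m ≤ a → m ≤ b → Real.log a - Real.log b ≤ |a - b| / m := by
    intro a b ha hb
    have ha0 : 0 < a := hm.trans_le ha
    have hb0 : 0 < b := hm.trans_le hb
    rw [← Real.log_div ha0.ne' hb0.ne']
    calc Real.log (a / b) ≤ a / b - 1 := Real.log_le_sub_one_of_pos (div_pos ha0 hb0)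
      _ = (a - b) / b := by field_simp
      _ ≤ |a - b| / b := by gcongr; exact le_abs_self _
      _ ≤ |a - b| / m := by gcongr
  have hfin : |Real.log (hAvg d α p₀ l x) - Real.log (l μ)| ≤ |hAvg d α p₀ l x - l μ| / m := by
    rw [abs_le]
    have h1 := hlog _ _ hAm hlxbar
    have h2 := hlog _ _ hlxbar hAm
    rw [abs_sub_comm] at h2
    constructor <;> linarith
  calc _ ≤ _ := hfin
    _ ≤ (η₂ / 2 * ∫ y, ‖y - μ‖ ^ 2 * w y) / m := by gcongr
    _ = _ := by field_simp
end
end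

section
/- (First error term of Theorem 1: accuracy of the approximated score relative to the idealized score.) Fix x ∈ ℝ^d and ε > 0. Assume log l is continuously differentiable with ‖∇ log l(y)‖ ≤ η for all y; log p_t is twice continuously differentiable with Hessian H_{p_t} that is L-Lipschitz in spectral norm; and the chain-rule identity ∇_x[log l(x̄₀(x))] = (1/√ᾱ) · (I + (1−ᾱ) · H_{p_t}(x)) · ∇(log l)(x̄₀(x)) holds at x. Then ‖s̃(x) − (∇ log p_t(x) + ∇_x[log l(x̄₀(x))])‖ ≤ (1−ᾱ) · L · η² · ε/(2√ᾱ). -/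
open MeasureTheory Real

noncomputable section

/-- The approximated importance score
`s̃(x) = ∇log p_t(x) + (1/√ᾱ)·v(x) + ((1−ᾱ)/(ε√ᾱ))·(∇log p_t(x + ε v(x)) − ∇log p_t(x))`
with `v(x) = ∇(log l)(x̄₀(x))`. -/
def sTilde (d : ℕ) (α ε : ℝ) (p₀ l : EuclideanSpace ℝ (Fin d) → ℝ)
    (x : EuclideanSpace ℝ (Fin d)) : EuclideanSpace ℝ (Fin d) :=
  gradient (fun z => Real.log (pt d α p₀ z)) x
    + (Real.sqrt α)⁻¹ • gradient (fun z => Real.log (l z)) (postMean d α p₀ x)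
    + ((1 - α) / (ε * Real.sqrt α)) •
        (gradient (fun z => Real.log (pt d α p₀ z))
            (x + ε • gradient (fun z => Real.log (l z)) (postMean d α p₀ x))
          - gradient (fun z => Real.log (pt d α p₀ z)) x)

theorem taylor_aux {E : Type*} [NormedAddCommGroup E] [NormedSpace ℝ E]
    (g : E → E) (H : E → E →L[ℝ] E) (hg : ∀ z, HasFDerivAt g (H z) z) (L : ℝ)
    (hL : ∀ z w, ‖H z - H w‖ ≤ L * ‖z - w‖) (x w : E) :
    ‖g (x + w) - g x - H x w‖ ≤ L * ‖w‖ ^ 2 / 2 := by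
  have hd : ∀ t : ℝ, HasDerivAt (fun t : ℝ => g (x + t • w) - g x - t • H x w)
      (H (x + t • w) w - H x w) t := by
    intro t
    have h1 : HasDerivAt (fun t : ℝ => x + t • w) w t := by
      simpa using ((hasDerivAt_id t).smul_const w).const_add x
    have h2 := (hg (x + t • w)).comp_hasDerivAt t h1
    have h3 : HasDerivAt (fun t : ℝ => t • H x w) (H x w) t := by
      simpa using (hasDerivAt_id t).smul_const (H x w)
    exact (h2.sub_const (g x)).sub h3
  have hB : ∀ t : ℝ, HasDerivAt (fun t : ℝ => L * ‖w‖ ^ 2 / 2 * t ^ 2) (L * ‖w‖ ^ 2 * t) t := by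
    intro t
    have := (hasDerivAt_pow 2 t).const_mul (L * ‖w‖ ^ 2 / 2)
    refine this.congr_deriv ?_
    norm_num
    ring
  have key := image_norm_le_of_norm_deriv_right_le_deriv_boundary
    (a := (0 : ℝ)) (b := 1)
    (f := fun t : ℝ => g (x + t • w) - g x - t • H x w)
    (fun t _ => (hd t).continuousAt.continuousWithinAt)
    (fun t _ => (hd t).hasDerivWithinAt)
    (B := fun t : ℝ => L * ‖w‖ ^ 2 / 2 * t ^ 2) (B' := fun t => L * ‖w‖ ^ 2 * t)
    (by simp) hB
    (by
      intro t ht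
      rw [← sub_apply]
      refine (ContinuousLinearMap.le_opNorm _ _).trans ?_
      have := hL (x + t • w) x
      rw [add_sub_cancel_left, norm_smul, Real.norm_of_nonneg ht.1] at this
      calc _ ≤ (L * (t * ‖w‖)) * ‖w‖ := by gcongr
        _ = _ := by ring)
    (x := 1) (by simp)
  simpa using key

theorem stmt11 (d : ℕ) (hd : 1 ≤ d) (α : ℝ) (hα0 : 0 < α) (hα1 : α < 1)
    (p₀ l : EuclideanSpace ℝ (Fin d) → ℝ)
    (hp₀pos : ∀ y, 0 < p₀ y) (hp₀int : Integrable p₀) (hp₀one : (∫ y, p₀ y) = 1)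
    (hptpos : ∀ x, 0 < pt d α p₀ x)
    (hlpos : ∀ y, 0 < l y)
    (η L : ℝ)
    (hldiff : ∀ y, DifferentiableAt ℝ (fun z => Real.log (l z)) y)
    (hlgradcont : Continuous fun y => gradient (fun z => Real.log (l z)) y)
    (hη : ∀ y, ‖gradient (fun z => Real.log (l z)) y‖ ≤ η)
    (Hp : EuclideanSpace ℝ (Fin d) →
      EuclideanSpace ℝ (Fin d) →L[ℝ] EuclideanSpace ℝ (Fin d))
    (hHp : ∀ z, HasFDerivAt (fun w => gradient (fun u => Real.log (pt d α p₀ u)) w) (Hp z) z)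
    (hHpcont : Continuous Hp)
    (hLip : ∀ z w, ‖Hp z - Hp w‖ ≤ L * ‖z - w‖)
    (x : EuclideanSpace ℝ (Fin d)) (ε : ℝ) (hε : 0 < ε)
    (hchain : gradient (fun x' => Real.log (l (postMean d α p₀ x'))) x
      = (Real.sqrt α)⁻¹ •
          (gradient (fun z => Real.log (l z)) (postMean d α p₀ x)
            + (1 - α) • Hp x (gradient (fun z => Real.log (l z)) (postMean d α p₀ x)))) :
    ‖sTilde d α ε p₀ l x
        - (gradient (fun z => Real.log (pt d α p₀ z)) x
            + gradient (fun x' => Real.log (l (postMean d α p₀ x'))) x)‖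
      ≤ (1 - α) * L * η ^ 2 * ε / (2 * Real.sqrt α) := by
  have : Nonempty (Fin d) := ⟨⟨0, hd⟩⟩
  have hL0 : 0 ≤ L := by
    obtain ⟨u, hu⟩ := exists_ne (0 : EuclideanSpace ℝ (Fin d))
    have h1 := (norm_nonneg _).trans (hLip u 0)
    rw [sub_zero] at h1
    exact nonneg_of_mul_nonneg_left h1 (norm_pos_iff.mpr hu)
  rw [hchain]
  unfold sTilde
  have hv := hη (postMean d α p₀ x)
  generalize gradient (fun z => Real.log (l z)) (postMean d α p₀ x) = v at hv ⊢
  have key := taylor_aux _ Hp hHp L hLip x (ε • v)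
  generalize (fun u => Real.log (pt d α p₀ u)) = f at key ⊢
  have hs : 0 < Real.sqrt α := Real.sqrt_pos.mpr hα0
  have h1 : 0 < 1 - α := by linarith
  have hc : 0 < (1 - α) / (ε * Real.sqrt α) := by positivity
  have e : gradient f x + (Real.sqrt α)⁻¹ • v
      + ((1 - α) / (ε * Real.sqrt α)) • (gradient f (x + ε • v) - gradient f x)
      - (gradient f x + (Real.sqrt α)⁻¹ • (v + (1 - α) • Hp x v))
      = ((1 - α) / (ε * Real.sqrt α)) •
        (gradient f (x + ε • v) - gradient f x - Hp x (ε • v)) := by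
    have e2 : (Real.sqrt α)⁻¹ * (1 - α) = (1 - α) / (ε * Real.sqrt α) * ε := by
      field_simp
    rw [map_smul, smul_sub _ _ (ε • Hp x v), smul_smul, ← e2, smul_add, smul_smul]
    abel
  rw [e, norm_smul, Real.norm_of_nonneg hc.le]
  rw [norm_smul, Real.norm_of_nonneg hε.le] at key
  calc _ ≤ (1 - α) / (ε * Real.sqrt α) * (L * (ε * ‖v‖) ^ 2 / 2) := by gcongr
    _ ≤ (1 - α) / (ε * Real.sqrt α) * (L * (ε * η) ^ 2 / 2) := by gcongr
    _ = _ := by field_simp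
end
end
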